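/- Let μ be a DNS satisfaction function. For every PB instance with budget b, minimum project cost c_min and maximum project cost c_max, the outcome P_M of MES_μ completed by Greedy_μ (both breaking ties by the same fixed linear order on projects) satisfies uw_μ(P_M) ≥ (2·√(c_min/b) − (c_min + c_max)/b) · uw_μ(P*) for every feasible outcome P* ⊆ P; i.e., MES_μ completed by Greedy_μ has utilitarian guarantee 2·√(c_min/b) − (c_min + c_max)/b. -/

import Mathlib

open Finset
open scoped Classical

noncomputable section

/-- A participatory budgeting (PB) instance. -/
structure PB (π ν : Type) where
  projs : Finset π
  voters : Finset ν
  approves : ν → Finset π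
  cost : π → ℝ
  budget : ℝ
  projs_nonempty : projs.Nonempty
  budget_pos : 0 < budget
  cost_pos : ∀ p ∈ projs, 0 < cost p
  cost_le_budget : ∀ p ∈ projs, cost p ≤ budget
  approves_subset : ∀ i ∈ voters, approves i ⊆ projs

/-- A satisfaction function assigns a positive value to each positive cost. -/
def IsSat (μ : ℝ → ℝ) : Prop := ∀ t : ℝ, 0 < t → 0 < μ t

/-- A DNS function: weakly increasing, with weakly decreasing satisfaction per unit cost. -/
def IsDNS (μ : ℝ → ℝ) : Prop :=
  IsSat μ ∧ (∀ s t : ℝ, 0 < s → s ≤ t → μ s ≤ μ t) ∧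
    (∀ s t : ℝ, 0 < s → s ≤ t → μ t / t ≤ μ s / s)

namespace PB

variable {π ν : Type}

/-- Supporters of a project. -/
def supp (I : PB π ν) (p : π) : Finset ν := I.voters.filter (fun i => p ∈ I.approves i)

/-- Total cost of a set of projects. -/
def costOf (I : PB π ν) (S : Finset π) : ℝ := ∑ p ∈ S, I.cost p

/-- A feasible outcome. -/
def feasibleSet (I : PB π ν) (S : Finset π) : Prop := S ⊆ I.projs ∧ I.costOf S ≤ I.budget

/-- Minimum project cost. -/
def cmin (I : PB π ν) : ℝ := I.projs.inf' I.projs_nonempty I.cost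

/-- Maximum project cost. -/
def cmax (I : PB π ν) : ℝ := I.projs.sup' I.projs_nonempty I.cost

/-- Utilitarian welfare of a set of projects. -/
def uw (I : PB π ν) (μ : ℝ → ℝ) (S : Finset π) : ℝ :=
  ∑ p ∈ S, ((I.supp p).card : ℝ) * μ (I.cost p)

/-- The value ("bang per buck") of a project. -/
def projVal (I : PB π ν) (μ : ℝ → ℝ) (p : π) : ℝ :=
  ((I.supp p).card : ℝ) * μ (I.cost p) / I.cost p

/-- Satisfaction of voter `i` from an outcome. -/
def satOf (I : PB π ν) (μ : ℝ → ℝ) (i : ν) (S : Finset π) : ℝ :=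
  ∑ p ∈ S ∩ I.approves i, μ (I.cost p)

/-- Minimum satisfaction of a project in the instance. -/
def muMin (I : PB π ν) (μ : ℝ → ℝ) : ℝ :=
  I.projs.inf' I.projs_nonempty (fun p => μ (I.cost p))

/-- Maximum satisfaction of a project in the instance. -/
def muMax (I : PB π ν) (μ : ℝ → ℝ) : ℝ :=
  I.projs.sup' I.projs_nonempty (fun p => μ (I.cost p))

/-- The maximal utilitarian welfare over feasible outcomes. -/
def maxUW (I : PB π ν) (μ : ℝ → ℝ) : ℝ :=
  (I.projs.powerset.filter (fun S => I.costOf S ≤ I.budget)).sup'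
    ⟨∅, Finset.mem_filter.mpr ⟨Finset.empty_mem_powerset _,
      by simpa [PB.costOf] using I.budget_pos.le⟩⟩
    (I.uw μ)

/-- A group `N'` is `T`-cohesive. -/
def cohesive (I : PB π ν) (N' : Finset ν) (T : Finset π) : Prop :=
  N' ⊆ I.voters ∧ T ⊆ I.projs ∧ (∀ i ∈ N', T ⊆ I.approves i) ∧
    I.costOf T ≤ ((N'.card : ℝ) / (I.voters.card : ℝ)) * I.budget

/-- Extended justified representation up to one project w.r.t. `μ`. -/
def EJR1 (I : PB π ν) (μ : ℝ → ℝ) (W : Finset π) : Prop :=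
  ∀ N' T, I.cohesive N' T →
    T ⊆ W ∨ ∃ i ∈ N', ∃ p ∈ I.approves i, p ∉ W ∧
      I.satOf μ i W + μ (I.cost p) > I.satOf μ i T

/-- Pick the element of maximal `f`-value, breaking ties by the linear order. -/
def pickMax [LinearOrder π] (f : π → ℝ) (S : Finset π) (h : S.Nonempty) : π :=
  (S.filter (fun p => ∀ q ∈ S, f q ≤ f p)).min' (by
    obtain ⟨p, hp, hm⟩ := S.exists_max_image f h
    exact ⟨p, Finset.mem_filter.mpr ⟨hp, hm⟩⟩)

/-- Pick the element of minimal `f`-value, breaking ties by the linear order. -/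
def pickMin [LinearOrder π] (f : π → ℝ) (S : Finset π) (h : S.Nonempty) : π :=
  (S.filter (fun p => ∀ q ∈ S, f p ≤ f q)).min' (by
    obtain ⟨p, hp, hm⟩ := S.exists_min_image f h
    exact ⟨p, Finset.mem_filter.mpr ⟨hp, hm⟩⟩)

section Greedy

variable [LinearOrder π]

/-- One choice of the greedy rule: among the unchosen affordable projects, the one of
maximum value (ties broken by the linear order); `none` if no project is affordable. -/
def greedyStep (I : PB π ν) (μ : ℝ → ℝ) (rem : Finset π) (budg : ℝ) : Option π :=
  if h : (rem.filter (fun p => I.cost p ≤ budg)).Nonempty then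
    some (pickMax (I.projVal μ) (rem.filter (fun p => I.cost p ≤ budg)) h)
  else none

/-- The (ordered) list of projects chosen by the greedy rule, with fuel. -/
def greedyAux (I : PB π ν) (μ : ℝ → ℝ) : ℕ → Finset π → ℝ → List π
  | 0, _, _ => []
  | (k+1), rem, budg =>
    match I.greedyStep μ rem budg with
    | none => []
    | some p => p :: greedyAux I μ k (rem.erase p) (budg - I.cost p)

/-- The projects chosen by `Greedy_μ`, in order of selection. -/
def greedySeq (I : PB π ν) (μ : ℝ → ℝ) : List π :=
  greedyAux I μ I.projs.card I.projs I.budget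

/-- The outcome of the greedy rule started from a set `rem` of unchosen projects
with remaining budget `budg`. -/
def greedyFrom (I : PB π ν) (μ : ℝ → ℝ) (rem : Finset π) (budg : ℝ) : Finset π :=
  (greedyAux I μ rem.card rem budg).toFinset

/-- The outcome of `Greedy_μ`. -/
def greedy (I : PB π ν) (μ : ℝ → ℝ) : Finset π := (I.greedySeq μ).toFinset

/-- The state (unchosen projects, remaining budget) of `Greedy_μ` after `k` stages. -/
def greedyStateAux (I : PB π ν) (μ : ℝ → ℝ) : ℕ → Finset π × ℝ
  | 0 => (I.projs, I.budget)
  | (k+1) =>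
    match I.greedyStep μ (greedyStateAux I μ k).1 (greedyStateAux I μ k).2 with
    | none => greedyStateAux I μ k
    | some p => ((greedyStateAux I μ k).1.erase p, (greedyStateAux I μ k).2 - I.cost p)

/-- The project chosen by `Greedy_μ` at stage `k+1` (i.e. after `k` stages), if any. -/
def greedyChoice (I : PB π ν) (μ : ℝ → ℝ) (k : ℕ) : Option π :=
  I.greedyStep μ (I.greedyStateAux μ k).1 (I.greedyStateAux μ k).2

end Greedy

section MES

variable [LinearOrder π]

/-- The set of values `ρ ≥ 0` at which project `p` can be bought given voter budgets `bud`. -/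
def rhoSet (I : PB π ν) (μ : ℝ → ℝ) (bud : ν → ℝ) (p : π) : Set ℝ :=
  {ρ : ℝ | 0 ≤ ρ ∧ ∑ i ∈ I.supp p, min (bud i) (ρ * μ (I.cost p)) = I.cost p}

/-- `ρ(p)`: the least `ρ ≥ 0` at which `p` can be bought (junk value if none exists). -/
def rho (I : PB π ν) (μ : ℝ → ℝ) (bud : ν → ℝ) (p : π) : ℝ := sInf (I.rhoSet μ bud p)

/-- One choice of MES: among the unchosen projects with `ρ(p) < ∞`, one minimizing `ρ(p)`
(ties broken by the linear order); `none` if no project can be bought. -/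
def mesStep (I : PB π ν) (μ : ℝ → ℝ) (rem : Finset π) (bud : ν → ℝ) : Option π :=
  if h : (rem.filter (fun p => (I.rhoSet μ bud p).Nonempty)).Nonempty then
    some (pickMin (I.rho μ bud) (rem.filter (fun p => (I.rhoSet μ bud p).Nonempty)) h)
  else none

/-- Voter budgets after the supporters of `p` pay for it. -/
def mesPay (I : PB π ν) (μ : ℝ → ℝ) (bud : ν → ℝ) (p : π) : ν → ℝ :=
  fun i => if i ∈ I.supp p then bud i - min (bud i) (I.rho μ bud p * μ (I.cost p)) else bud i

/-- The state (unchosen projects, voter budgets) of `MES_μ` after `k` stages. -/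
def mesStateAux (I : PB π ν) (μ : ℝ → ℝ) : ℕ → Finset π × (ν → ℝ)
  | 0 => (I.projs, fun _ => I.budget / (I.voters.card : ℝ))
  | (k+1) =>
    match I.mesStep μ (mesStateAux I μ k).1 (mesStateAux I μ k).2 with
    | none => mesStateAux I μ k
    | some p => ((mesStateAux I μ k).1.erase p, I.mesPay μ (mesStateAux I μ k).2 p)

/-- The project chosen by `MES_μ` at stage `k+1` (i.e. after `k` stages), if any. -/
def mesChoice (I : PB π ν) (μ : ℝ → ℝ) (k : ℕ) : Option π :=
  I.mesStep μ (I.mesStateAux μ k).1 (I.mesStateAux μ k).2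

/-- The final state of `MES_μ`. -/
def mesFinal (I : PB π ν) (μ : ℝ → ℝ) : Finset π × (ν → ℝ) :=
  I.mesStateAux μ I.projs.card

/-- The outcome of `MES_μ`. -/
def mesOutcome (I : PB π ν) (μ : ℝ → ℝ) : Finset π := I.projs \ (I.mesFinal μ).1

/-- The outcome of `MES_μ` completed by `Greedy_μ`: run MES, then greedy on the unchosen
projects with the remaining total budget. -/
def completedMES (I : PB π ν) (μ : ℝ → ℝ) : Finset π :=
  I.mesOutcome μ ∪
    I.greedyFrom μ (I.mesFinal μ).1 (I.budget - I.costOf (I.mesOutcome μ))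

/-- Voter `i` is budget-limited for project `p` after `k` stages of `MES_μ`:
`p` is unchosen and approved by `i`, affordable from the total remaining budget,
but an equal split of its cost exceeds `i`'s personal budget. -/
def budgetLimitedAt (I : PB π ν) (μ : ℝ → ℝ) (k : ℕ) (i : ν) (p : π) : Prop :=
  i ∈ I.voters ∧ p ∈ (I.mesStateAux μ k).1 ∧ p ∈ I.approves i ∧
    I.cost p ≤ ∑ j ∈ I.voters, (I.mesStateAux μ k).2 j ∧
    (I.mesStateAux μ k).2 i < I.cost p / ((I.supp p).card : ℝ)

end MES

/-- Total cost of a list of projects. -/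
def listCost (I : PB π ν) (L : List π) : ℝ := (L.map I.cost).sum

/-- Total utilitarian welfare of a list of projects. -/
def listUW (I : PB π ν) (μ : ℝ → ℝ) (L : List π) : ℝ :=
  (L.map (fun p => ((I.supp p).card : ℝ) * μ (I.cost p))).sum

end PB

/-!
Let `p` be a project of maximal value `v` in `P* \ P_M`, and cap all project values at `v`. Capping
removes at most as much welfare from `P*` as from `P_M`, and the capped welfare of `P*` is at most
`v * b`, so it suffices to bound the capped welfare of `P_M` from below by a multiple of `v * b`.

As long as every supporter of `p` can afford an equal share of `c(p)`, MES could buy `p` at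
`ρ = 1 / v`; so it buys only projects of value at least `v`, and voters pay at most `1 / v` per unit
of satisfaction. When this phase ends some voter has spent almost `b / n`, which forces the total
cost `C` of the phase to be at least `κ * v / w - c_max`, where `w = n * μ_min / b` and `κ` is such
that `κ * μ(q) ≤ μ_min * c(q)` for all `q` (for a DNS function, `κ = c_min`). Whatever MES buys
later has value at least `w`, because no supporter pays more than `b / n`, and the completion buys
projects of value at least `v` until `p` does not fit any more. The capped welfare of `P_M` is
therefore at least `v * C + w * (b - c_max - C)`, and minimising over `w` by AM-GM gives the bound.
-/

section Estimates

variable {b c v w κ C : ℝ}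

theorem two_mul_sqrt_sub_add_div_le_one (hb : 0 < b) (hκ : 0 ≤ κ) (hc : 0 ≤ c) :
    2 * Real.sqrt (κ / b) - (κ + c) / b ≤ 1 := by
  have hsq : Real.sqrt (κ / b) ^ 2 = κ / b := Real.sq_sqrt (by positivity)
  have hcb : 0 ≤ c / b := by positivity
  rw [add_div]
  linarith [sq_nonneg (Real.sqrt (κ / b) - 1)]

theorem two_mul_sqrt_mul_le_div_add (hb : 0 < b) (hκ : 0 ≤ κ) (hw : 0 < w) :
    2 * Real.sqrt (κ / b) * (v * b) ≤ κ * v ^ 2 / w + b * w := by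
  set s := Real.sqrt (κ / b) with hs
  have hκs : κ = s ^ 2 * b := by
    rw [hs, Real.sq_sqrt (by positivity)]
    field_simp
  have hsquare : κ * v ^ 2 / w + b * w - 2 * s * (v * b) = b / w * (s * v - w) ^ 2 := by
    rw [hκs]
    field_simp
    ring
  have hnonneg : 0 ≤ b / w * (s * v - w) ^ 2 := by positivity
  linarith

theorem guarantee_mul_le_of_le_cost (hb : 0 < b) (hκ : 0 ≤ κ) (hw : 0 < w) (hwv : w ≤ v)
    (hC : κ * v / w - c ≤ C) :
    (2 * Real.sqrt (κ / b) - (κ + c) / b) * (v * b) ≤ v * C + w * (b - c - C) :=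
  calc (2 * Real.sqrt (κ / b) - (κ + c) / b) * (v * b)
      = 2 * Real.sqrt (κ / b) * (v * b) - (κ + c) * v := by field_simp
    _ ≤ κ * v ^ 2 / w + b * w - (κ + c) * v := by
        gcongr
        exact two_mul_sqrt_mul_le_div_add hb hκ hw
    _ = (v - w) * (κ * v / w - c) + w * (b - c) := by field_simp; ring
    _ ≤ (v - w) * C + w * (b - c) := by gcongr
    _ = v * C + w * (b - c - C) := by ring

end Estimates

namespace PB

variable {π ν : Type} {I : PB π ν} {μ : ℝ → ℝ}

section Instance

variable {p : π} {S T : Finset π} {v w g : ℝ}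

theorem cmin_le_cost (hp : p ∈ I.projs) : I.cmin ≤ I.cost p :=
  inf'_le _ hp

theorem cost_le_cmax (hp : p ∈ I.projs) : I.cost p ≤ I.cmax :=
  le_sup' _ hp

theorem cmin_pos (I : PB π ν) : 0 < I.cmin :=
  (lt_inf'_iff _).mpr I.cost_pos

theorem cmax_pos (I : PB π ν) : 0 < I.cmax := by
  obtain ⟨p, hp⟩ := I.projs_nonempty
  exact (I.cost_pos p hp).trans_le (cost_le_cmax hp)

theorem muMin_le (hp : p ∈ I.projs) : I.muMin μ ≤ μ (I.cost p) :=
  inf'_le (fun p => μ (I.cost p)) hp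

theorem muMin_pos (hμ : IsSat μ) : 0 < I.muMin μ :=
  (lt_inf'_iff _).mpr fun p hp => hμ _ (I.cost_pos p hp)

theorem costOf_nonneg (hS : S ⊆ I.projs) : 0 ≤ I.costOf S :=
  sum_nonneg fun q hq => (I.cost_pos q (hS hq)).le

theorem projVal_nonneg (hμ : IsSat μ) (hp : p ∈ I.projs) : 0 ≤ I.projVal μ p := by
  have hc := I.cost_pos p hp
  have hsat := hμ _ hc
  unfold projVal
  positivity

theorem card_supp_pos_of_projVal_pos (hv : 0 < I.projVal μ p) : 0 < #(I.supp p) := by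
  rw [Nat.pos_iff_ne_zero]
  intro h
  simp [projVal, h] at hv

theorem card_voters_pos_of_projVal_pos (hv : 0 < I.projVal μ p) : 0 < #I.voters :=
  (card_supp_pos_of_projVal_pos hv).trans_le (card_le_card (filter_subset _ _))

theorem inv_projVal_mul (hv : 0 < I.projVal μ p) :
    (I.projVal μ p)⁻¹ * μ (I.cost p) = I.cost p / #(I.supp p) := by
  have hsat : μ (I.cost p) ≠ 0 := by
    intro h
    simp [projVal, h] at hv
  unfold projVal
  field_simp

theorem uw_eq_sum_projVal_mul_cost (hS : S ⊆ I.projs) :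
    I.uw μ S = ∑ q ∈ S, I.projVal μ q * I.cost q :=
  sum_congr rfl fun q hq => (div_mul_cancel₀ _ (I.cost_pos q (hS hq)).ne').symm

theorem uw_nonneg (hμ : IsSat μ) (hS : S ⊆ I.projs) : 0 ≤ I.uw μ S := by
  rw [uw_eq_sum_projVal_mul_cost hS]
  exact sum_nonneg fun q hq =>
    mul_nonneg (projVal_nonneg hμ (hS hq)) (I.cost_pos q (hS hq)).le

/-- The utilitarian welfare of `S` when the value of every project is capped at `v`; it is the
part of the welfare on which the outcome of the rule and an optimal outcome are compared. -/
def cappedUW (I : PB π ν) (μ : ℝ → ℝ) (v : ℝ) (S : Finset π) : ℝ :=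
  ∑ q ∈ S, min (I.projVal μ q) v * I.cost q

theorem cappedUW_nonneg (hμ : IsSat μ) (hv : 0 ≤ v) (hS : S ⊆ I.projs) :
    0 ≤ I.cappedUW μ v S :=
  sum_nonneg fun q hq =>
    mul_nonneg (le_min (projVal_nonneg hμ (hS hq)) hv) (I.cost_pos q (hS hq)).le

theorem cappedUW_mono (hμ : IsSat μ) (hv : 0 ≤ v) (hT : T ⊆ I.projs) (hST : S ⊆ T) :
    I.cappedUW μ v S ≤ I.cappedUW μ v T :=
  sum_le_sum_of_subset_of_nonneg hST fun q hq _ =>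
    mul_nonneg (le_min (projVal_nonneg hμ (hT hq)) hv) (I.cost_pos q (hT hq)).le

theorem cappedUW_le_mul_costOf (hS : S ⊆ I.projs) : I.cappedUW μ v S ≤ v * I.costOf S := by
  rw [costOf, mul_sum]
  exact sum_le_sum fun q hq =>
    mul_le_mul_of_nonneg_right (min_le_right _ _) (I.cost_pos q (hS hq)).le

theorem mul_costOf_le_cappedUW (hS : S ⊆ I.projs) (hwv : w ≤ v)
    (hw : ∀ q ∈ S, w ≤ I.projVal μ q) : w * I.costOf S ≤ I.cappedUW μ v S := by
  rw [costOf, mul_sum]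
  exact sum_le_sum fun q hq =>
    mul_le_mul_of_nonneg_right (le_min (hw q hq) hwv) (I.cost_pos q (hS hq)).le

theorem mul_costOf_add_mul_le_cappedUW (hT : T ⊆ I.projs) (hST : S ⊆ T) (hwv : w ≤ v)
    (hS : ∀ q ∈ S, v ≤ I.projVal μ q) (hw : ∀ q ∈ T, w ≤ I.projVal μ q) :
    v * I.costOf S + w * (I.costOf T - I.costOf S) ≤ I.cappedUW μ v T := by
  have hcost : I.costOf (T \ S) + I.costOf S = I.costOf T := sum_sdiff hST
  have hcapped : I.cappedUW μ v (T \ S) + I.cappedUW μ v S = I.cappedUW μ v T := sum_sdiff hST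
  have hhigh : v * I.costOf S ≤ I.cappedUW μ v S :=
    mul_costOf_le_cappedUW (hST.trans hT) le_rfl hS
  have hlow : w * I.costOf (T \ S) ≤ I.cappedUW μ v (T \ S) :=
    mul_costOf_le_cappedUW (sdiff_subset.trans hT) hwv fun q hq => hw q (sdiff_subset hq)
  rw [← hcost, add_sub_cancel_right]
  linarith

theorem uw_sub_cappedUW (hS : S ⊆ I.projs) :
    I.uw μ S - I.cappedUW μ v S =
      ∑ q ∈ S, (I.projVal μ q - min (I.projVal μ q) v) * I.cost q := by
  simp only [uw_eq_sum_projVal_mul_cost hS, cappedUW, ← sum_sub_distrib, sub_mul]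

theorem uw_sub_cappedUW_le (hS : S ⊆ I.projs) (hT : T ⊆ I.projs)
    (hv : ∀ q ∈ S, q ∉ T → I.projVal μ q ≤ v) :
    I.uw μ S - I.cappedUW μ v S ≤ I.uw μ T - I.cappedUW μ v T := by
  rw [uw_sub_cappedUW hS, uw_sub_cappedUW hT]
  have hinter : ∑ q ∈ S ∩ T, (I.projVal μ q - min (I.projVal μ q) v) * I.cost q =
      ∑ q ∈ S, (I.projVal μ q - min (I.projVal μ q) v) * I.cost q := by
    refine sum_subset inter_subset_left fun q hqS hq => ?_
    have hqT : q ∉ T := fun hqT => hq (mem_inter.mpr ⟨hqS, hqT⟩)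
    rw [min_eq_left (hv q hqS hqT), sub_self, zero_mul]
  rw [← hinter]
  exact sum_le_sum_of_subset_of_nonneg inter_subset_right fun q hq _ =>
    mul_nonneg (sub_nonneg.mpr (min_le_left _ _)) (I.cost_pos q (hT hq)).le

theorem cappedUW_le_uw (hS : S ⊆ I.projs) : I.cappedUW μ v S ≤ I.uw μ S := by
  rw [uw_eq_sum_projVal_mul_cost hS]
  exact sum_le_sum fun q hq =>
    mul_le_mul_of_nonneg_right (min_le_left _ _) (I.cost_pos q (hS hq)).le

theorem mul_uw_le_uw_of_mul_le_cappedUW (hμ : IsSat μ) (hS : I.feasibleSet S)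
    (hT : T ⊆ I.projs) (hv : 0 ≤ v) (hST : ∀ q ∈ S, q ∉ T → I.projVal μ q ≤ v) (hg : g ≤ 1)
    (hcap : g * (v * I.budget) ≤ I.cappedUW μ v T) : g * I.uw μ S ≤ I.uw μ T := by
  obtain ⟨hSprojs, hSbudget⟩ := hS
  rcases le_total g 0 with hg0 | hg0
  · exact (mul_nonpos_of_nonpos_of_nonneg hg0 (uw_nonneg hμ hSprojs)).trans (uw_nonneg hμ hT)
  have hcapS : I.cappedUW μ v S ≤ v * I.budget :=
    (cappedUW_le_mul_costOf hSprojs).trans (mul_le_mul_of_nonneg_left hSbudget hv)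
  have hexcess := uw_sub_cappedUW_le hSprojs hT hST
  have hexcess_nonneg : 0 ≤ I.uw μ T - I.cappedUW μ v T := sub_nonneg.mpr (cappedUW_le_uw hT)
  calc g * I.uw μ S
      ≤ g * (v * I.budget + (I.uw μ T - I.cappedUW μ v T)) := by gcongr; linarith
    _ = g * (v * I.budget) + g * (I.uw μ T - I.cappedUW μ v T) := mul_add _ _ _
    _ ≤ I.cappedUW μ v T + (I.uw μ T - I.cappedUW μ v T) :=
        add_le_add hcap (mul_le_of_le_one_left hexcess_nonneg hg)
    _ = I.uw μ T := add_sub_cancel _ _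

end Instance

section ValueFloor

variable {p : π} {H : Finset π} {κ : ℝ}

/-- The value `n * μ_min / b`, which is a lower bound for the value of every project that a group
of voters can pay for out of the initial personal budgets `b / n`. -/
def valueFloor (I : PB π ν) (μ : ℝ → ℝ) : ℝ :=
  #I.voters * I.muMin μ / I.budget

theorem valueFloor_pos (hμ : IsSat μ) (hn : 0 < #I.voters) : 0 < I.valueFloor μ :=
  div_pos (mul_pos (mod_cast hn) (muMin_pos hμ)) I.budget_pos

theorem cmin_mul_le_muMin_mul_cost (hDNS : IsDNS μ) (hp : p ∈ I.projs) :
    I.cmin * μ (I.cost p) ≤ I.muMin μ * I.cost p := by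
  obtain ⟨-, hmono, hdecr⟩ := hDNS
  have hmin : μ I.cmin ≤ I.muMin μ :=
    le_inf' _ _ fun q hq => hmono _ _ I.cmin_pos (cmin_le_cost hq)
  have hratio := hdecr _ _ I.cmin_pos (cmin_le_cost hp)
  rw [div_le_div_iff₀ (I.cost_pos p hp) I.cmin_pos, mul_comm] at hratio
  exact hratio.trans (mul_le_mul_of_nonneg_right hmin (I.cost_pos p hp).le)

theorem le_cost_of_mul_le_muMin_mul (hμ : IsSat μ) (hp : p ∈ I.projs)
    (hκ : κ * μ (I.cost p) ≤ I.muMin μ * I.cost p) : κ ≤ I.cost p := by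
  have hc := I.cost_pos p hp
  refine le_of_mul_le_mul_right (hκ.trans ?_) (hμ _ hc)
  rw [mul_comm (I.cost p)]
  exact mul_le_mul_of_nonneg_right (muMin_le hp) hc.le

theorem mul_projVal_div_valueFloor_sub_cmax_le (hμ : IsSat μ) (hκ0 : 0 ≤ κ)
    (hκ : ∀ q ∈ I.projs, κ * μ (I.cost q) ≤ I.muMin μ * I.cost q) (hp : p ∈ I.projs)
    (hH : H ⊆ I.projs)
    (hspent : I.budget / #I.voters * I.projVal μ p ≤ ∑ q ∈ H, μ (I.cost q) + μ (I.cost p)) :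
    κ * I.projVal μ p / I.valueFloor μ - I.cmax ≤ I.costOf H := by
  have hm := muMin_pos (I := I) hμ
  have hb := I.budget_pos
  have hsat : κ * (∑ q ∈ H, μ (I.cost q) + μ (I.cost p)) ≤
      I.muMin μ * (I.costOf H + I.cost p) := by
    rw [costOf, mul_add, mul_add, mul_sum, mul_sum]
    exact add_le_add (sum_le_sum fun q hq => hκ q (hH hq)) (hκ p hp)
  have hcost : κ * I.projVal μ p / I.valueFloor μ ≤ I.costOf H + I.cost p :=
    calc κ * I.projVal μ p / I.valueFloor μ
        = κ * (I.budget / #I.voters * I.projVal μ p) / I.muMin μ := by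
          unfold valueFloor
          field_simp
      _ ≤ κ * (∑ q ∈ H, μ (I.cost q) + μ (I.cost p)) / I.muMin μ := by gcongr
      _ ≤ I.costOf H + I.cost p := by rwa [div_le_iff₀' hm]
  linarith [cost_le_cmax hp]

end ValueFloor

section Greedy

variable [LinearOrder π] {p q : π} {rem : Finset π} {budg : ℝ}

theorem pickMax_mem_filter (f : π → ℝ) (S : Finset π) (h : S.Nonempty) :
    pickMax f S h ∈ S.filter fun p => ∀ q ∈ S, f q ≤ f p :=
  min'_mem _ _

theorem mem_of_greedyStep_eq_some (h : I.greedyStep μ rem budg = some q) : q ∈ rem := by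
  unfold greedyStep at h
  split_ifs at h with hne
  rw [← Option.some.inj h]
  exact (mem_filter.mp (mem_filter.mp (pickMax_mem_filter _ _ hne)).1).1

theorem projVal_le_of_greedyStep_eq_some (h : I.greedyStep μ rem budg = some q) (hp : p ∈ rem)
    (hcost : I.cost p ≤ budg) : I.projVal μ p ≤ I.projVal μ q := by
  unfold greedyStep at h
  split_ifs at h with hne
  rw [← Option.some.inj h]
  exact (mem_filter.mp (pickMax_mem_filter _ _ hne)).2 p (mem_filter.mpr ⟨hp, hcost⟩)

theorem exists_greedyStep_eq_some (hp : p ∈ rem) (hcost : I.cost p ≤ budg) :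
    ∃ q, I.greedyStep μ rem budg = some q :=
  ⟨_, dif_pos ⟨p, mem_filter.mpr ⟨hp, hcost⟩⟩⟩

theorem greedyFrom_of_greedyStep_eq_none (h : I.greedyStep μ rem budg = none) :
    I.greedyFrom μ rem budg = ∅ := by
  unfold greedyFrom
  cases #rem <;> simp [greedyAux, h]

theorem greedyFrom_of_greedyStep_eq_some (h : I.greedyStep μ rem budg = some q) :
    I.greedyFrom μ rem budg = insert q (I.greedyFrom μ (rem.erase q) (budg - I.cost q)) := by
  rw [greedyFrom, greedyFrom, ← card_erase_add_one (mem_of_greedyStep_eq_some h), greedyAux]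
  simp only [h, List.toFinset_cons]

theorem greedyFrom_subset (rem : Finset π) (budg : ℝ) : I.greedyFrom μ rem budg ⊆ rem := by
  induction rem using Finset.strongInduction generalizing budg with
  | H rem ih =>
    cases h : I.greedyStep μ rem budg with
    | none =>
      rw [greedyFrom_of_greedyStep_eq_none h]
      exact empty_subset _
    | some q =>
      have hq := mem_of_greedyStep_eq_some h
      rw [greedyFrom_of_greedyStep_eq_some h]
      exact insert_subset hq ((ih _ (erase_ssubset hq) _).trans (erase_subset _ _))

theorem exists_subset_greedyFrom_of_notMem (hp : p ∈ rem) (hnot : p ∉ I.greedyFrom μ rem budg) :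
    ∃ G ⊆ I.greedyFrom μ rem budg,
      (∀ q ∈ G, I.projVal μ p ≤ I.projVal μ q) ∧ budg - I.cost p ≤ I.costOf G := by
  induction rem using Finset.strongInduction generalizing budg with
  | H rem ih =>
    rcases lt_or_ge budg (I.cost p) with hcost | hcost
    · exact ⟨∅, empty_subset _, by simp, by simpa [costOf] using hcost.le⟩
    obtain ⟨q, hstep⟩ := exists_greedyStep_eq_some (μ := μ) hp hcost
    rw [greedyFrom_of_greedyStep_eq_some hstep, mem_insert, not_or] at hnot
    obtain ⟨G, hG, hval, hbudg⟩ :=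
      ih _ (erase_ssubset (mem_of_greedyStep_eq_some hstep)) (mem_erase.mpr ⟨hnot.1, hp⟩) hnot.2
    have hqG : q ∉ G := fun hq => notMem_erase q rem (greedyFrom_subset _ _ (hG hq))
    refine ⟨insert q G, ?_, ?_, ?_⟩
    · rw [greedyFrom_of_greedyStep_eq_some hstep]
      exact insert_subset_insert q hG
    · rw [forall_mem_insert]
      exact ⟨projVal_le_of_greedyStep_eq_some hstep hp hcost, hval⟩
    · rw [costOf, sum_insert hqG]
      unfold costOf at hbudg
      linarith

end Greedy

section Price

variable {p : π} {bud : ν → ℝ} {ρ B : ℝ}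

theorem bddBelow_rhoSet (I : PB π ν) (μ : ℝ → ℝ) (bud : ν → ℝ) (p : π) :
    BddBelow (I.rhoSet μ bud p) :=
  ⟨0, fun _ hρ => hρ.1⟩

theorem rho_nonneg (I : PB π ν) (μ : ℝ → ℝ) (bud : ν → ℝ) (p : π) : 0 ≤ I.rho μ bud p :=
  Real.sInf_nonneg fun _ hρ => hρ.1

theorem isClosed_rhoSet (I : PB π ν) (μ : ℝ → ℝ) (bud : ν → ℝ) (p : π) :
    IsClosed (I.rhoSet μ bud p) :=
  (isClosed_le continuous_const continuous_id).inter
    (isClosed_eq (by fun_prop) continuous_const)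

theorem rho_mem_rhoSet (h : (I.rhoSet μ bud p).Nonempty) : I.rho μ bud p ∈ I.rhoSet μ bud p :=
  (isClosed_rhoSet I μ bud p).csInf_mem h (bddBelow_rhoSet I μ bud p)

theorem one_le_mul_projVal_of_mem_rhoSet (hcost : 0 < I.cost p) (hρ : ρ ∈ I.rhoSet μ bud p) :
    1 ≤ ρ * I.projVal μ p := by
  have hpaid : I.cost p ≤ #(I.supp p) * (ρ * μ (I.cost p)) := by
    rw [← nsmul_eq_mul]
    exact hρ.2.symm.le.trans (sum_le_card_nsmul _ _ _ fun _ _ => min_le_right _ _)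
  rw [projVal, ← mul_div_assoc, le_div_iff₀ hcost]
  linarith

theorem cost_le_card_supp_mul_of_mem_rhoSet (hbud : ∀ i, bud i ≤ B) (hρ : ρ ∈ I.rhoSet μ bud p) :
    I.cost p ≤ #(I.supp p) * B := by
  rw [← nsmul_eq_mul]
  exact hρ.2.symm.le.trans
    (sum_le_card_nsmul _ _ _ fun i _ => (min_le_left _ _).trans (hbud i))

/-- Every supporter of `p` can afford an equal share of its cost from the personal budgets `bud`.
This is the condition under which MES can buy `p` at `ρ = 1 / v(p)`, the least price possible. -/
def EquallyAffordable (I : PB π ν) (bud : ν → ℝ) (p : π) : Prop :=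
  ∀ i ∈ I.supp p, I.cost p / #(I.supp p) ≤ bud i

theorem EquallyAffordable.inv_projVal_mem_rhoSet (h : I.EquallyAffordable bud p)
    (hv : 0 < I.projVal μ p) : (I.projVal μ p)⁻¹ ∈ I.rhoSet μ bud p := by
  have hcard : (0 : ℝ) < #(I.supp p) := mod_cast card_supp_pos_of_projVal_pos hv
  refine ⟨by positivity, ?_⟩
  rw [inv_projVal_mul hv, sum_congr rfl fun i hi => min_eq_right (h i hi), sum_const,
    nsmul_eq_mul, mul_div_cancel₀ _ hcard.ne']

end Price

section Payment

variable {p : π} {bud : ν → ℝ} {i : ν} {ρ : ℝ}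

theorem mesPay_nonneg (h : 0 ≤ bud i) : 0 ≤ I.mesPay μ bud p i := by
  unfold mesPay
  split_ifs
  · exact sub_nonneg.mpr (min_le_left _ _)
  · exact h

theorem mesPay_le (hμ : 0 ≤ μ (I.cost p)) (h : 0 ≤ bud i) : I.mesPay μ bud p i ≤ bud i := by
  unfold mesPay
  split_ifs
  · exact sub_le_self _ (le_min h (mul_nonneg (rho_nonneg I μ bud p) hμ))
  · exact le_rfl

theorem sub_mesPay_le (hμ : 0 ≤ μ (I.cost p)) (hρ : I.rho μ bud p ≤ ρ) :
    bud i - I.mesPay μ bud p i ≤ ρ * μ (I.cost p) := by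
  have hprice : I.rho μ bud p * μ (I.cost p) ≤ ρ * μ (I.cost p) :=
    mul_le_mul_of_nonneg_right hρ hμ
  unfold mesPay
  split_ifs
  · rw [sub_sub_cancel]
    exact (min_le_right _ _).trans hprice
  · rw [sub_self]
    exact (mul_nonneg (rho_nonneg I μ bud p) hμ).trans hprice

end Payment

section MES

variable [LinearOrder π] {p q : π} {k : ℕ}

theorem pickMin_mem_filter (f : π → ℝ) (S : Finset π) (h : S.Nonempty) :
    pickMin f S h ∈ S.filter fun p => ∀ q ∈ S, f p ≤ f q :=
  min'_mem _ _

theorem mem_of_mesChoice_eq_some (h : I.mesChoice μ k = some q) :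
    q ∈ (I.mesStateAux μ k).1 := by
  unfold mesChoice mesStep at h
  split_ifs at h with hne
  rw [← Option.some.inj h]
  exact (mem_filter.mp (mem_filter.mp (pickMin_mem_filter _ _ hne)).1).1

theorem rho_mem_rhoSet_of_mesChoice_eq_some (h : I.mesChoice μ k = some q) :
    I.rho μ (I.mesStateAux μ k).2 q ∈ I.rhoSet μ (I.mesStateAux μ k).2 q := by
  unfold mesChoice mesStep at h
  split_ifs at h with hne
  rw [← Option.some.inj h]
  exact rho_mem_rhoSet (mem_filter.mp (mem_filter.mp (pickMin_mem_filter _ _ hne)).1).2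

theorem rho_le_of_mesChoice_eq_some {ρ : ℝ} (h : I.mesChoice μ k = some q)
    (hp : p ∈ (I.mesStateAux μ k).1) (hρ : ρ ∈ I.rhoSet μ (I.mesStateAux μ k).2 p) :
    I.rho μ (I.mesStateAux μ k).2 q ≤ ρ := by
  unfold mesChoice mesStep at h
  split_ifs at h with hne
  rw [← Option.some.inj h]
  exact ((mem_filter.mp (pickMin_mem_filter _ _ hne)).2 p (mem_filter.mpr ⟨hp, ρ, hρ⟩)).trans
    (csInf_le (bddBelow_rhoSet _ _ _ _) hρ)

theorem rhoSet_eq_empty_of_mesChoice_eq_none (h : I.mesChoice μ k = none)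
    (hp : p ∈ (I.mesStateAux μ k).1) : I.rhoSet μ (I.mesStateAux μ k).2 p = ∅ := by
  unfold mesChoice mesStep at h
  split_ifs at h with hne
  by_contra hρ
  exact hne ⟨p, mem_filter.mpr ⟨hp, Set.nonempty_iff_ne_empty.mpr hρ⟩⟩

theorem mesStateAux_succ_of_eq_none (h : I.mesChoice μ k = none) :
    I.mesStateAux μ (k + 1) = I.mesStateAux μ k := by
  unfold mesChoice at h
  simp only [mesStateAux, h]

theorem mesStateAux_succ_of_eq_some (h : I.mesChoice μ k = some q) :
    I.mesStateAux μ (k + 1) =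
      ((I.mesStateAux μ k).1.erase q, I.mesPay μ (I.mesStateAux μ k).2 q) := by
  unfold mesChoice at h
  simp only [mesStateAux, h]

theorem antitone_mesStateAux_fst (I : PB π ν) (μ : ℝ → ℝ) :
    Antitone fun k => (I.mesStateAux μ k).1 := by
  refine antitone_nat_of_succ_le fun k => ?_
  cases h : I.mesChoice μ k with
  | none => rw [mesStateAux_succ_of_eq_none h]
  | some q =>
    rw [mesStateAux_succ_of_eq_some h]
    exact erase_subset _ _

theorem mesStateAux_fst_subset (I : PB π ν) (μ : ℝ → ℝ) (k : ℕ) :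
    (I.mesStateAux μ k).1 ⊆ I.projs :=
  antitone_mesStateAux_fst I μ k.zero_le

theorem mem_projs_of_mesChoice_eq_some (h : I.mesChoice μ k = some q) : q ∈ I.projs :=
  mesStateAux_fst_subset I μ k (mem_of_mesChoice_eq_some h)

theorem card_add_le_of_mesChoice_eq_some (h : I.mesChoice μ k = some q) :
    #(I.mesStateAux μ k).1 + k ≤ #I.projs := by
  induction k generalizing q with
  | zero => exact card_le_card (mesStateAux_fst_subset I μ 0)
  | succ k ih =>
    cases hk : I.mesChoice μ k with
    | none =>
      rw [mesChoice, mesStateAux_succ_of_eq_none hk, ← mesChoice, hk] at h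
      contradiction
    | some r =>
      have hcard := card_erase_add_one (mem_of_mesChoice_eq_some hk)
      rw [mesStateAux_succ_of_eq_some hk]
      have := ih hk
      lia

theorem mesChoice_card_projs (I : PB π ν) (μ : ℝ → ℝ) : I.mesChoice μ #I.projs = none := by
  by_contra hne
  obtain ⟨q, hq⟩ := Option.ne_none_iff_exists'.mp hne
  have hle := card_add_le_of_mesChoice_eq_some hq
  have hpos := card_pos.mpr ⟨q, mem_of_mesChoice_eq_some hq⟩
  lia

/-- The projects bought by `MES_μ` in its first `k` stages. -/
def mesChosen (I : PB π ν) (μ : ℝ → ℝ) (k : ℕ) : Finset π :=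
  I.projs \ (I.mesStateAux μ k).1

theorem mesChosen_subset_mesOutcome (hk : k ≤ #I.projs) :
    I.mesChosen μ k ⊆ I.mesOutcome μ :=
  sdiff_subset_sdiff Subset.rfl (antitone_mesStateAux_fst I μ hk)

theorem mesChosen_succ_of_eq_none (h : I.mesChoice μ k = none) :
    I.mesChosen μ (k + 1) = I.mesChosen μ k := by
  rw [mesChosen, mesStateAux_succ_of_eq_none h, mesChosen]

theorem mesChosen_succ_of_eq_some (h : I.mesChoice μ k = some q) :
    I.mesChosen μ (k + 1) = insert q (I.mesChosen μ k) := by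
  rw [mesChosen, mesStateAux_succ_of_eq_some h, mesChosen,
    sdiff_erase (mem_projs_of_mesChoice_eq_some h)]

theorem notMem_mesChosen_of_mesChoice_eq_some (h : I.mesChoice μ k = some q) :
    q ∉ I.mesChosen μ k :=
  fun hq => (mem_sdiff.mp hq).2 (mem_of_mesChoice_eq_some h)

theorem exists_mesChoice_eq_some_of_mem_mesChosen (h : q ∈ I.mesChosen μ k) :
    ∃ j < k, I.mesChoice μ j = some q := by
  induction k with
  | zero => simp [mesChosen, mesStateAux] at h
  | succ k ih =>
    have of_mem (hq : q ∈ I.mesChosen μ k) : ∃ j < k + 1, I.mesChoice μ j = some q := by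
      obtain ⟨j, hj, hchoice⟩ := ih hq
      exact ⟨j, hj.trans k.lt_succ_self, hchoice⟩
    cases hk : I.mesChoice μ k with
    | none => exact of_mem (mesChosen_succ_of_eq_none hk ▸ h)
    | some r =>
      rw [mesChosen_succ_of_eq_some hk, mem_insert] at h
      rcases h with rfl | h
      · exact ⟨k, k.lt_succ_self, hk⟩
      · exact of_mem h

theorem mesStateAux_snd_nonneg (I : PB π ν) (μ : ℝ → ℝ) (k : ℕ) (i : ν) :
    0 ≤ (I.mesStateAux μ k).2 i := by
  induction k with
  | zero => exact div_nonneg I.budget_pos.le (Nat.cast_nonneg _)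
  | succ k ih =>
    cases h : I.mesChoice μ k with
    | none => rwa [mesStateAux_succ_of_eq_none h]
    | some q =>
      rw [mesStateAux_succ_of_eq_some h]
      exact mesPay_nonneg ih

theorem mesStateAux_snd_le (hμ : IsSat μ) (k : ℕ) (i : ν) :
    (I.mesStateAux μ k).2 i ≤ I.budget / #I.voters := by
  induction k with
  | zero => exact le_rfl
  | succ k ih =>
    cases h : I.mesChoice μ k with
    | none => rwa [mesStateAux_succ_of_eq_none h]
    | some q =>
      rw [mesStateAux_succ_of_eq_some h]
      have hsat := hμ _ (I.cost_pos q (mem_projs_of_mesChoice_eq_some h))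
      exact (mesPay_le hsat.le (mesStateAux_snd_nonneg I μ k i)).trans ih

theorem budget_div_sub_mesStateAux_snd_le {ρ : ℝ} (hμ : IsSat μ)
    (hρ : ∀ j < k, ∀ q, I.mesChoice μ j = some q → I.rho μ (I.mesStateAux μ j).2 q ≤ ρ) (i : ν) :
    I.budget / #I.voters - (I.mesStateAux μ k).2 i ≤ ρ * ∑ q ∈ I.mesChosen μ k, μ (I.cost q) := by
  induction k with
  | zero => simp [mesChosen, mesStateAux]
  | succ k ih =>
    have hspent := ih fun j hj => hρ j (hj.trans k.lt_succ_self)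
    cases h : I.mesChoice μ k with
    | none => rwa [mesStateAux_succ_of_eq_none h, mesChosen_succ_of_eq_none h]
    | some q =>
      have hsat := hμ _ (I.cost_pos q (mem_projs_of_mesChoice_eq_some h))
      have hpaid : (I.mesStateAux μ k).2 i - I.mesPay μ (I.mesStateAux μ k).2 q i ≤
          ρ * μ (I.cost q) :=
        sub_mesPay_le hsat.le (hρ k k.lt_succ_self q h)
      rw [mesStateAux_succ_of_eq_some h, mesChosen_succ_of_eq_some h,
        sum_insert (notMem_mesChosen_of_mesChoice_eq_some h), mul_add]
      linarith

theorem projVal_le_of_mesChoice_eq_some (hμ : IsSat μ) (h : I.mesChoice μ k = some q)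
    (hv : 0 < I.projVal μ p)
    (hρ : I.rho μ (I.mesStateAux μ k).2 q ≤ (I.projVal μ p)⁻¹) :
    I.projVal μ p ≤ I.projVal μ q := by
  have hq := mem_projs_of_mesChoice_eq_some h
  have hone : 1 ≤ (I.projVal μ p)⁻¹ * I.projVal μ q :=
    (one_le_mul_projVal_of_mem_rhoSet (I.cost_pos q hq)
      (rho_mem_rhoSet_of_mesChoice_eq_some h)).trans
      (mul_le_mul_of_nonneg_right hρ (projVal_nonneg hμ hq))
  rwa [← div_eq_inv_mul, one_le_div₀ hv] at hone

theorem valueFloor_le_projVal_of_mem_mesOutcome (hμ : IsSat μ) (hq : q ∈ I.mesOutcome μ) :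
    I.valueFloor μ ≤ I.projVal μ q := by
  obtain ⟨k, -, h⟩ := exists_mesChoice_eq_some_of_mem_mesChosen hq
  have hq := mem_projs_of_mesChoice_eq_some h
  have hcost : I.cost q ≤ #(I.supp q) * (I.budget / #I.voters) :=
    cost_le_card_supp_mul_of_mem_rhoSet (mesStateAux_snd_le hμ k)
      (rho_mem_rhoSet_of_mesChoice_eq_some h)
  rw [← mul_div_assoc] at hcost
  have hshare : I.cost q * #I.voters ≤ #(I.supp q) * I.budget :=
    mul_le_of_le_div₀ (mul_nonneg (Nat.cast_nonneg _) I.budget_pos.le) (Nat.cast_nonneg _) hcost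
  rw [valueFloor, projVal, div_le_div_iff₀ I.budget_pos (I.cost_pos q hq)]
  calc #I.voters * I.muMin μ * I.cost q
      = I.cost q * #I.voters * I.muMin μ := by ring
    _ ≤ #(I.supp q) * I.budget * μ (I.cost q) :=
        mul_le_mul hshare (muMin_le hq) (muMin_pos hμ).le
          (mul_nonneg (Nat.cast_nonneg _) I.budget_pos.le)
    _ = #(I.supp q) * μ (I.cost q) * I.budget := by ring

theorem exists_first_not_equallyAffordable (hp : p ∈ (I.mesFinal μ).1)
    (hv : 0 < I.projVal μ p) :
    ∃ k ≤ #I.projs, ¬ I.EquallyAffordable (I.mesStateAux μ k).2 p ∧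
      ∀ j < k, I.EquallyAffordable (I.mesStateAux μ j).2 p := by
  have hfinal : ¬ I.EquallyAffordable (I.mesStateAux μ #I.projs).2 p := fun haff =>
    Set.notMem_empty _ <|
      rhoSet_eq_empty_of_mesChoice_eq_none (mesChoice_card_projs I μ) hp ▸
        haff.inv_projVal_mem_rhoSet hv
  have hex : ∃ k, ¬ I.EquallyAffordable (I.mesStateAux μ k).2 p := ⟨_, hfinal⟩
  exact ⟨Nat.find hex, Nat.find_min' hex hfinal, Nat.find_spec hex,
    fun j hj => not_not.mp (Nat.find_min hex hj)⟩

theorem exists_subset_mesOutcome_of_mem_mesFinal (hμ : IsSat μ) (hp : p ∈ (I.mesFinal μ).1)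
    (hv : 0 < I.projVal μ p) :
    ∃ H ⊆ I.mesOutcome μ, (∀ q ∈ H, I.projVal μ p ≤ I.projVal μ q) ∧
      I.budget / #I.voters * I.projVal μ p ≤ ∑ q ∈ H, μ (I.cost q) + μ (I.cost p) := by
  obtain ⟨k, hk, hnot, haff⟩ := exists_first_not_equallyAffordable hp hv
  have hρ : ∀ j < k, ∀ q, I.mesChoice μ j = some q →
      I.rho μ (I.mesStateAux μ j).2 q ≤ (I.projVal μ p)⁻¹ := fun j hj q hq =>
    rho_le_of_mesChoice_eq_some hq (antitone_mesStateAux_fst I μ (hj.le.trans hk) hp)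
      ((haff j hj).inv_projVal_mem_rhoSet hv)
  refine ⟨I.mesChosen μ k, mesChosen_subset_mesOutcome hk, fun q hq => ?_, ?_⟩
  · obtain ⟨j, hj, hchoice⟩ := exists_mesChoice_eq_some_of_mem_mesChosen hq
    exact projVal_le_of_mesChoice_eq_some hμ hchoice hv (hρ j hj q hchoice)
  · unfold EquallyAffordable at hnot
    push Not at hnot
    obtain ⟨i, -, hpoor⟩ := hnot
    have hspent := budget_div_sub_mesStateAux_snd_le hμ hρ i
    rw [← inv_projVal_mul hv] at hpoor
    rw [← le_div_iff₀ hv, div_eq_inv_mul (_ + _), mul_add]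
    linarith

end MES

section CompletedMES

variable [LinearOrder π] {p : π} {κ : ℝ}

theorem completedMES_subset (I : PB π ν) (μ : ℝ → ℝ) : I.completedMES μ ⊆ I.projs :=
  union_subset sdiff_subset ((greedyFrom_subset _ _).trans (mesStateAux_fst_subset I μ _))

theorem mem_mesFinal_of_notMem_completedMES (hp : p ∈ I.projs) (hnot : p ∉ I.completedMES μ) :
    p ∈ (I.mesFinal μ).1 := by
  by_contra h
  exact hnot (mem_union_left _ (mem_sdiff.mpr ⟨hp, h⟩))

theorem exists_between_mesOutcome_completedMES (hp : p ∈ I.projs)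
    (hnot : p ∉ I.completedMES μ) :
    ∃ S, I.mesOutcome μ ⊆ S ∧ S ⊆ I.completedMES μ ∧
      (∀ q ∈ S, q ∉ I.mesOutcome μ → I.projVal μ p ≤ I.projVal μ q) ∧
      I.budget - I.cost p ≤ I.costOf S := by
  obtain ⟨G, hG, hval, hcost⟩ :=
    exists_subset_greedyFrom_of_notMem (mem_mesFinal_of_notMem_completedMES hp hnot)
      fun h => hnot (mem_union_right _ h)
  have hdisj : Disjoint (I.mesOutcome μ) G :=
    disjoint_sdiff_self_left.mono_right (hG.trans (greedyFrom_subset _ _))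
  refine ⟨I.mesOutcome μ ∪ G, subset_union_left, union_subset_union_right hG, ?_, ?_⟩
  · exact fun q hq hq' => hval q ((mem_union.mp hq).resolve_left hq')
  · have hunion : I.costOf (I.mesOutcome μ ∪ G) = I.costOf (I.mesOutcome μ) + I.costOf G :=
      sum_union hdisj
    linarith

theorem guarantee_mul_le_cappedUW_completedMES (hμ : IsSat μ) (hκ0 : 0 ≤ κ)
    (hκ : ∀ q ∈ I.projs, κ * μ (I.cost q) ≤ I.muMin μ * I.cost q) (hp : p ∈ I.projs)
    (hnot : p ∉ I.completedMES μ) :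
    (2 * Real.sqrt (κ / I.budget) - (κ + I.cmax) / I.budget) * (I.projVal μ p * I.budget) ≤
      I.cappedUW μ (I.projVal μ p) (I.completedMES μ) := by
  rcases (projVal_nonneg hμ hp).eq_or_lt with hv0 | hv
  · rw [← hv0, zero_mul, mul_zero]
    exact cappedUW_nonneg hμ le_rfl (completedMES_subset I μ)
  set v := I.projVal μ p
  obtain ⟨S, hMS, hSW, hgreedy, hScost⟩ := exists_between_mesOutcome_completedMES hp hnot
  obtain ⟨H, hHM, hHval, hspent⟩ := exists_subset_mesOutcome_of_mem_mesFinal hμ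
    (mem_mesFinal_of_notMem_completedMES hp hnot) hv
  have hS : S ⊆ I.projs := hSW.trans (completedMES_subset I μ)
  have hH : H ⊆ I.projs := hHM.trans (hMS.trans hS)
  have hn := card_voters_pos_of_projVal_pos hv
  set w := min (I.valueFloor μ) v with hw
  have hwpos : 0 < w := lt_min (valueFloor_pos hμ hn) hv
  have hwv : w ≤ v := min_le_right _ _
  have hwval : ∀ q ∈ S, w ≤ I.projVal μ q := fun q hq => by
    by_cases hqM : q ∈ I.mesOutcome μ
    · exact (min_le_left _ _).trans (valueFloor_le_projVal_of_mem_mesOutcome hμ hqM)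
    · exact hwv.trans (hgreedy q hq hqM)
  have hHcost : κ * v / w - I.cmax ≤ I.costOf H := by
    rcases min_choice (I.valueFloor μ) v with hmin | hmin <;> rw [hw, hmin]
    · exact mul_projVal_div_valueFloor_sub_cmax_le hμ hκ0 hκ hp hH hspent
    · rw [mul_div_cancel_right₀ _ hv.ne']
      linarith [le_cost_of_mul_le_muMin_mul hμ hp (hκ p hp), cost_le_cmax hp, costOf_nonneg hH]
  calc _ ≤ v * I.costOf H + w * (I.budget - I.cmax - I.costOf H) :=
        guarantee_mul_le_of_le_cost I.budget_pos hκ0 hwpos hwv hHcost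
    _ ≤ v * I.costOf H + w * (I.costOf S - I.costOf H) := by
        gcongr
        linarith [cost_le_cmax hp]
    _ ≤ I.cappedUW μ v S :=
        mul_costOf_add_mul_le_cappedUW hS (hHM.trans hMS) hwv hHval hwval
    _ ≤ I.cappedUW μ v (I.completedMES μ) :=
        cappedUW_mono hμ hv.le (completedMES_subset I μ) hSW

end CompletedMES

end PB

theorem mes_guarantee_general {π ν : Type} [LinearOrder π] {I : PB π ν} {μ : ℝ → ℝ}
    (hμ : IsSat μ) {κ : ℝ} (hκ0 : 0 ≤ κ)
    (hκ : ∀ p ∈ I.projs, κ * μ (I.cost p) ≤ I.muMin μ * I.cost p)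
    {Pstar : Finset π} (hPstar : I.feasibleSet Pstar) :
    (2 * Real.sqrt (κ / I.budget) - (κ + I.cmax) / I.budget) * I.uw μ Pstar ≤
      I.uw μ (I.completedMES μ) := by
  have hW := PB.completedMES_subset I μ
  have hg := two_mul_sqrt_sub_add_div_le_one I.budget_pos hκ0 I.cmax_pos.le
  rcases (Pstar \ I.completedMES μ).eq_empty_or_nonempty with hempty | hne
  · have hsub : Pstar ⊆ I.completedMES μ := sdiff_eq_empty_iff_subset.mp hempty
    refine PB.mul_uw_le_uw_of_mul_le_cappedUW hμ hPstar hW le_rfl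
      (fun q hq hq' => absurd (hsub hq) hq') hg ?_
    rw [zero_mul, mul_zero]
    exact PB.cappedUW_nonneg hμ le_rfl hW
  · obtain ⟨p, hp, hmax⟩ := exists_max_image _ (I.projVal μ) hne
    obtain ⟨hpstar, hpW⟩ := mem_sdiff.mp hp
    exact PB.mul_uw_le_uw_of_mul_le_cappedUW hμ hPstar hW
      (PB.projVal_nonneg hμ (hPstar.1 hpstar))
      (fun q hq hq' => hmax q (mem_sdiff.mpr ⟨hq, hq'⟩)) hg
      (PB.guarantee_mul_le_cappedUW_completedMES hμ hκ0 hκ (hPstar.1 hpstar) hpW)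

/-- Utilitarian guarantee of MES completed by Greedy for DNS functions. -/
theorem mes_guarantee {π ν : Type} [LinearOrder π] (I : PB π ν)
    (μ : ℝ → ℝ) (hDNS : IsDNS μ) :
    ∀ Pstar : Finset π, I.feasibleSet Pstar →
      I.uw μ (I.completedMES μ) ≥
        (2 * Real.sqrt (I.cmin / I.budget) - (I.cmin + I.cmax) / I.budget) *
          I.uw μ Pstar :=
  fun _ hPstar => mes_guarantee_general hDNS.1 I.cmin_pos.le
    (fun _ hp => PB.cmin_mul_le_muMin_mul_cost hDNS hp) hPstar
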